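/- Let A be a nonzero real m×n matrix, b ∈ ℝ^m, and let W be a real symmetric n×n matrix all of whose eigenvalues lie in [0,1], with ker(A) ∩ fix(W) = {0}. Fix γ with 0 < γ < 1/λ_max(AᵀA) and a real sequence {α_k}_{k≥1} with α_k → 1. Then the matrix I_n − W(I_n − γAᵀA) is invertible, and for every initialization x₀ ∈ ℝ^n, the α-PnP-FISTA iterates defined by y₁ = x₀ and, for k ≥ 1, x_k = W(y_k − γAᵀ(A y_k − b)) and y_{k+1} = x_k + α_k(x_k − x_{k−1}), converge linearly to x* := (I_n − W(I_n − γAᵀA))^{−1}(γ W Aᵀ b): there exist C > 0, β ∈ [0,1), and K ≥ 1 such that ‖x_k − x*‖₂ ≤ C·β^k for all k ≥ K. -/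

import Mathlib

/-!
Let `R` be the positive square root of `1 - γ • (Aᵀ * A)`. Up to its fixed point, a plug-and-play
step is multiplication by `(W * R) * R`, and exchanging the two factors gives the symmetric matrix
`S = R * W * R`, for which `0 ≤ S ≤ l < 1`. The strict inequality holds because `W * R * R` has no
nonzero fixed vector: one such `x` would satisfy `‖x‖² ≤ ⟪x, R² x⟫ = ‖x‖² - γ ‖A x‖²`, hence
`A x = 0` and `W x = x`.

For the momentum iteration of `S`, the energy `⟪u - S u, u⟫ + ⟪S (u - v), u - v⟫` of consecutive
iterates `v`, `u` is multiplied by at most `q² l` in a step whose parameter satisfies `|α k| ≤ q`,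
where `q ≥ 1`. Since `α k → 1`, this factor is eventually below `1`. The errors of the original
iteration are the images under `W * R` of extrapolated iterates for `S`.
-/

open Filter Matrix

/-- The Euclidean (ℓ²) norm on `Fin n → ℝ`. -/
noncomputable def norm2 {n : ℕ} (x : Fin n → ℝ) : ℝ := Real.sqrt (∑ i, x i ^ 2)

/-- The largest eigenvalue of a real (symmetric) matrix, as the supremum of its real
spectrum. -/
noncomputable def lamMax {n : ℕ} (S : Matrix (Fin n) (Fin n) ℝ) : ℝ := sSup (spectrum ℝ S)

open Asymptotics
open scoped InnerProductSpace

section LinearConvergence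

variable {E : Type*} [NormedAddCommGroup E]

/-- `u` converges linearly to `z`, with a rate `β` taken positive so that shifting the index only
changes the implied constant. -/
def ConvergesLinearly (u : ℕ → E) (z : E) : Prop :=
  ∃ β ∈ Set.Ioo (0 : ℝ) 1, (fun k => u k - z) =O[atTop] fun k => β ^ k

theorem ConvergesLinearly.of_shift {u : ℕ → E} {z : E} (N : ℕ)
    (h : ConvergesLinearly (fun k => u (k + N)) z) : ConvergesLinearly u z := by
  obtain ⟨β, hβ, hO⟩ := h
  refine ⟨β, hβ, ?_⟩
  have h_sub : (fun k => u k - z) =O[atTop] fun k => β ^ (k - N) := by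
    refine (hO.comp_tendsto (tendsto_sub_atTop_nat N)).congr' ?_ .rfl
    filter_upwards [eventually_ge_atTop N] with k hk
    simp only [Function.comp_apply, Nat.sub_add_cancel hk]
  have h_pow : (fun k => β ^ (k - N)) =ᶠ[atTop] fun k => (β ^ N)⁻¹ * β ^ k := by
    filter_upwards [eventually_ge_atTop N] with k hk
    rw [pow_sub₀ β hβ.1.ne' hk, mul_comm]
  exact h_sub.trans (h_pow.trans_isBigO (isBigO_const_mul_self _ _ _))

theorem ConvergesLinearly.exists_norm_sub_le {u : ℕ → E} {z : E} (h : ConvergesLinearly u z) :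
    ∃ C, 0 < C ∧ ∃ β : ℝ, 0 ≤ β ∧ β < 1 ∧ ∃ K, 1 ≤ K ∧ ∀ k, K ≤ k → ‖u k - z‖ ≤ C * β ^ k := by
  obtain ⟨β, ⟨hβ0, hβ1⟩, hO⟩ := h
  obtain ⟨C, hC, hbound⟩ := hO.exists_pos
  obtain ⟨K, hK⟩ := eventually_atTop.1 hbound.bound
  refine ⟨C, hC, β, hβ0.le, hβ1, max K 1, le_max_right K 1, fun k hk => ?_⟩
  simpa [abs_of_pos hβ0] using hK k (le_of_max_le_left hk)

theorem isBigO_pow_of_eventually_le_mul {V : ℕ → ℝ} {ρ : ℝ} (hρ : 0 < ρ) (hV : ∀ k, 0 ≤ V k)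
    (hstep : ∀ᶠ k in atTop, V (k + 1) ≤ ρ * V k) : V =O[atTop] fun k => ρ ^ k := by
  obtain ⟨N, hN⟩ := eventually_atTop.1 hstep
  refine .of_bound (V N / ρ ^ N) ?_
  filter_upwards [eventually_ge_atTop N] with k hk
  obtain ⟨j, rfl⟩ := Nat.exists_eq_add_of_le hk
  have h_geom : V (N + j) ≤ ρ ^ j * V N :=
    le_geom (u := fun i => V (N + i)) hρ.le j fun i _ => hN (N + i) (Nat.le_add_right N i)
  calc ‖V (N + j)‖ = V (N + j) := Real.norm_of_nonneg (hV _)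
    _ ≤ ρ ^ j * V N := h_geom
    _ = V N / ρ ^ N * ‖ρ ^ (N + j)‖ := by
      rw [Real.norm_of_nonneg (by positivity), pow_add]
      field_simp

theorem convergesLinearly_zero_of_lyapunov {u : ℕ → E} {V : ℕ → ℝ} {c ρ : ℝ} (hc : 0 < c)
    (hρ : ρ ∈ Set.Ioo (0 : ℝ) 1) (hV : ∀ k, c * ‖u k‖ ^ 2 ≤ V k)
    (hstep : ∀ᶠ k in atTop, V (k + 1) ≤ ρ * V k) : ConvergesLinearly u 0 := by
  have hV0 : ∀ k, 0 ≤ V k := fun k => (by positivity : 0 ≤ c * ‖u k‖ ^ 2).trans (hV k)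
  have h_norm_sq : (fun k => ‖u k‖ ^ 2) =O[atTop] V := by
    refine .of_bound c⁻¹ (.of_forall fun k => ?_)
    rw [Real.norm_of_nonneg (by positivity), Real.norm_of_nonneg (hV0 k), inv_mul_eq_div,
      le_div_iff₀' hc]
    exact hV k
  have h_sq : ((fun k => ‖u k‖) ^ 2) =O[atTop] ((fun k => √ρ ^ k) ^ 2) := by
    refine (h_norm_sq.trans (isBigO_pow_of_eventually_le_mul hρ.1 hV0 hstep)).congr_right
      fun k => ?_
    rw [Pi.pow_apply, pow_right_comm, Real.sq_sqrt hρ.1.le]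
  refine ⟨√ρ, ⟨Real.sqrt_pos.2 hρ.1, (Real.sqrt_lt' one_pos).2 (by simpa using hρ.2)⟩, ?_⟩
  simpa only [sub_zero] using (h_sq.of_pow two_ne_zero).of_norm_left

end LinearConvergence

section Momentum

section Module

variable {E F : Type*} [AddCommGroup E] [Module ℝ E] [AddCommGroup F] [Module ℝ F] {α : ℕ → ℝ}

/-- `u` is generated by the map `T` with momentum parameters `α`: each new iterate is `T` applied to
the extrapolation of the previous two. The index is shifted so that no predecessor occurs; `α 0` and
the value of `u 1` are unconstrained. -/
def IsMomentumIteration (T : E → E) (α : ℕ → ℝ) (u : ℕ → E) : Prop :=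
  ∀ k, u (k + 2) = T (u (k + 1) + α (k + 1) • (u (k + 1) - u k))

theorem isMomentumIteration_of_extrapolation {T : E → E} {x y : ℕ → E}
    (hx : ∀ k, 1 ≤ k → x k = T (y k))
    (hy : ∀ k, 1 ≤ k → y (k + 1) = x k + α k • (x k - x (k - 1))) :
    IsMomentumIteration T α x := fun k => by
  rw [hx (k + 2) (by lia), hy (k + 1) (by lia), Nat.add_sub_cancel]

theorem IsMomentumIteration.sub_const {T P : E → E} {u : ℕ → E} {z : E}
    (hu : IsMomentumIteration T α u) (hT : ∀ v, T v - z = P (v - z)) :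
    IsMomentumIteration P α fun k => u k - z := fun k => by
  simp only [hu k, hT, sub_sub_sub_cancel_right, sub_add_eq_add_sub]

theorem IsMomentumIteration.map {T : E → E} {S : F → F} {u : ℕ → E}
    (hu : IsMomentumIteration T α u) (C : E →ₗ[ℝ] F) (hC : ∀ v, C (T v) = S (C v)) :
    IsMomentumIteration S α fun k => C (u k) := fun k => by
  simp only [hu k, hC, map_add, map_smul, map_sub]

end Module

variable {E : Type*} [NormedAddCommGroup E] [InnerProductSpace ℝ E]
  {S : E →ₗ[ℝ] E} {l : ℝ} {α : ℕ → ℝ}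

theorem inner_apply_self_le (hSl : S ≤ l • 1) (x : E) : ⟪S x, x⟫_ℝ ≤ l * ‖x‖ ^ 2 := by
  have h_nonneg : 0 ≤ ⟪(l • 1 - S) x, x⟫_ℝ := ((LinearMap.le_def _ _).1 hSl).inner_nonneg_left x
  simpa [inner_sub_left, inner_smul_left] using h_nonneg

theorem norm_sq_apply_le (hS : S.IsPositive) (hSl : S ≤ l • 1) (hl : 0 < l) (x : E) :
    ‖S x‖ ^ 2 ≤ l * ⟪S x, x⟫_ℝ := by
  have h_sym : ⟪S (S x), x⟫_ℝ = ‖S x‖ ^ 2 := by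
    rw [hS.isSymmetric, real_inner_self_eq_norm_sq]
  -- `l * S * (l - S) = (l - S) * S * (l - S) + S * (l - S) * S` is a sum of two positive terms.
  have h_first : 0 ≤ ⟪S (l • x - S x), l • x - S x⟫_ℝ := hS.inner_nonneg_left _
  have h_second : ⟪S (S x), S x⟫_ℝ ≤ l * ‖S x‖ ^ 2 := inner_apply_self_le hSl (S x)
  rw [map_sub, map_smul, inner_sub_right, inner_sub_left, inner_sub_left, inner_smul_right,
    inner_smul_right, inner_smul_left, inner_smul_left, h_sym, real_inner_self_eq_norm_sq,
    conj_trivial] at h_first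
  exact le_of_mul_le_mul_left (by linarith) hl

/-- The Lyapunov function of the momentum iteration of `S`, evaluated at the current iterate `u` and
the previous iterate `v`. -/
noncomputable def momentumEnergy (S : E →ₗ[ℝ] E) (u v : E) : ℝ :=
  ⟪u - S u, u⟫_ℝ + ⟪S (u - v), u - v⟫_ℝ

theorem norm_sq_le_momentumEnergy (hS : S.IsPositive) (hSl : S ≤ l • 1) (u v : E) :
    (1 - l) * ‖u‖ ^ 2 ≤ momentumEnergy S u v := by
  have h_gap : ⟪S u, u⟫_ℝ ≤ l * ‖u‖ ^ 2 := inner_apply_self_le hSl u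
  have h_diff : 0 ≤ ⟪S (u - v), u - v⟫_ℝ := hS.inner_nonneg_left _
  rw [momentumEnergy, inner_sub_left, real_inner_self_eq_norm_sq]
  linarith

theorem momentumEnergy_apply_extrapolation (hS : S.IsSymmetric) (a : ℝ) (u v : E) :
    momentumEnergy S (S (u + a • (u - v))) u =
      ⟪S u, u⟫_ℝ - ‖S u‖ ^ 2 + a ^ 2 * ‖S (u - v)‖ ^ 2 := by
  set p := S (u + a • (u - v)) with hp
  have h_square : momentumEnergy S p u = ⟪S u, u⟫_ℝ - ‖S u‖ ^ 2 + ‖p - S u‖ ^ 2 := by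
    have h_swap : ⟪S p, u⟫_ℝ = ⟪p, S u⟫_ℝ := hS p u
    have h_swap' : ⟪S u, p⟫_ℝ = ⟪p, S u⟫_ℝ := real_inner_comm _ _
    rw [momentumEnergy, norm_sub_sq_real, map_sub]
    simp only [inner_sub_left, inner_sub_right, real_inner_self_eq_norm_sq, h_swap, h_swap']
    ring
  have h_diff : p - S u = a • S (u - v) := by rw [hp, map_add, map_smul, add_sub_cancel_left]
  rw [h_square, h_diff, norm_smul, mul_pow, Real.norm_eq_abs, sq_abs]

theorem inner_apply_sub_norm_sq_le (hSl : S ≤ l • 1) (hl1 : l ≤ 1) (u : E) :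
    ⟪S u, u⟫_ℝ - ‖S u‖ ^ 2 ≤ l * ⟪u - S u, u⟫_ℝ := by
  -- `(l - S) * (1 - S) = (l - S) ^ 2 + (1 - l) * (l - S)` is a sum of two positive terms.
  have h_sq : 0 ≤ ‖l • u - S u‖ ^ 2 := sq_nonneg _
  have h_gap : 0 ≤ (1 - l) * (l * ‖u‖ ^ 2 - ⟪S u, u⟫_ℝ) :=
    mul_nonneg (sub_nonneg.2 hl1) (sub_nonneg.2 (inner_apply_self_le hSl u))
  rw [norm_sub_sq_real, inner_smul_left, real_inner_comm, norm_smul, mul_pow, Real.norm_eq_abs,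
    sq_abs, conj_trivial] at h_sq
  rw [inner_sub_left, real_inner_self_eq_norm_sq]
  linarith

theorem momentumEnergy_step_le (hS : S.IsPositive) (hSl : S ≤ l • 1) (hl : 0 < l) (hl1 : l ≤ 1)
    {a q : ℝ} (hq : 1 ≤ q) (ha : |a| ≤ q) (u v : E) :
    momentumEnergy S (S (u + a • (u - v))) u ≤ q ^ 2 * l * momentumEnergy S u v := by
  have h_gap : 0 ≤ ⟪u - S u, u⟫_ℝ := by
    have h_le : ⟪S u, u⟫_ℝ ≤ l * ‖u‖ ^ 2 := inner_apply_self_le hSl u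
    rw [inner_sub_left, real_inner_self_eq_norm_sq]
    nlinarith [sq_nonneg ‖u‖]
  calc momentumEnergy S (S (u + a • (u - v))) u
      = ⟪S u, u⟫_ℝ - ‖S u‖ ^ 2 + a ^ 2 * ‖S (u - v)‖ ^ 2 :=
        momentumEnergy_apply_extrapolation hS.isSymmetric a u v
    _ ≤ l * ⟪u - S u, u⟫_ℝ + q ^ 2 * (l * ⟪S (u - v), u - v⟫_ℝ) := by
        gcongr ?_ + ?_ * ?_
        · exact inner_apply_sub_norm_sq_le hSl hl1 u
        · exact sq_le_sq.2 (ha.trans (le_abs_self q))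
        · exact norm_sq_apply_le hS hSl hl (u - v)
    _ ≤ q ^ 2 * (l * ⟪u - S u, u⟫_ℝ) + q ^ 2 * (l * ⟪S (u - v), u - v⟫_ℝ) := by
        gcongr ?_ + _
        exact le_mul_of_one_le_left (by positivity) (one_le_pow₀ hq)
    _ = q ^ 2 * l * momentumEnergy S u v := by rw [momentumEnergy]; ring

theorem IsMomentumIteration.convergesLinearly_zero (hS : S.IsPositive) (hSl : S ≤ l • 1)
    (hl : 0 < l) (hl1 : l < 1) (hα : ∀ ε > 0, ∀ᶠ k in atTop, |α k| ≤ 1 + ε) {u : ℕ → E}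
    (hu : IsMomentumIteration S α u) : ConvergesLinearly u 0 := by
  set ε : ℝ := (1 - l) / 2 with hε
  have hε0 : 0 < ε := half_pos (sub_pos.2 hl1)
  have h_rate : (1 + ε) ^ 2 * l < 1 := by
    have h_factor : 1 - (1 + ε) ^ 2 * l = (1 - l) ^ 2 * (4 - l) / 4 := by rw [hε]; ring
    have h_pos : 0 < (1 - l) ^ 2 * (4 - l) :=
      mul_pos (pow_pos (sub_pos.2 hl1) 2) (by linarith)
    linarith
  refine .of_shift 1 (convergesLinearly_zero_of_lyapunov (sub_pos.2 hl1) ⟨by positivity, h_rate⟩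
    (fun k => norm_sq_le_momentumEnergy hS hSl (u (k + 1)) (u k)) ?_)
  filter_upwards [(tendsto_add_atTop_nat 1).eventually (hα ε hε0)] with k hk
  rw [hu k]
  exact momentumEnergy_step_le hS hSl hl hl1.le (by linarith) hk _ _

theorem IsMomentumIteration.convergesLinearly_zero_of_comp {F : Type*} [NormedAddCommGroup F]
    [NormedSpace ℝ F] {B : E →L[ℝ] F} {C : F →ₗ[ℝ] E} (hS : (C ∘ₗ B.toLinearMap).IsPositive)
    (hSl : C ∘ₗ B.toLinearMap ≤ l • 1) (hl : 0 < l) (hl1 : l < 1)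
    (hα : ∀ ε > 0, ∀ᶠ k in atTop, |α k| ≤ 1 + ε) {u : ℕ → F}
    (hu : IsMomentumIteration (fun v => B (C v)) α u) : ConvergesLinearly u 0 := by
  have h_image : IsMomentumIteration (C ∘ₗ B.toLinearMap) α fun k => C (u k) :=
    hu.map C fun _ => rfl
  obtain ⟨β, hβ, hO⟩ := h_image.convergesLinearly_zero hS hSl hl hl1 hα
  simp only [sub_zero] at hO
  have h_next : (fun k => C (u (k + 1))) =O[atTop] fun k => β ^ k :=
    (hO.comp_tendsto (tendsto_add_atTop_nat 1)).trans (.of_bound β (.of_forall fun k => by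
      simp [pow_succ', abs_of_pos hβ.1]))
  have hα_bdd : (fun k => α (k + 1)) =O[atTop] fun _ => (1 : ℝ) := by
    refine .of_bound 2 ?_
    filter_upwards [(tendsto_add_atTop_nat 1).eventually (hα 1 one_pos)] with k hk
    simpa [one_add_one_eq_two] using hk
  have h_extrapolation :
      (fun k => C (u (k + 1)) + α (k + 1) • (C (u (k + 1)) - C (u k))) =O[atTop]
        fun k => β ^ k := by
    exact h_next.add (by simpa only [one_smul] using hα_bdd.smul (h_next.sub hO))
  refine .of_shift 2 ⟨β, hβ, ?_⟩
  refine ((B.isBigO_comp _ _).trans h_extrapolation).congr_left fun k => ?_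
  simp only [sub_zero, hu k, map_add, map_smul, map_sub]

end Momentum

section LoewnerOrder

open scoped MatrixOrder

theorem exists_lt_one_le_smul_one {R : Type*} [TopologicalSpace R] [Ring R] [StarRing R]
    [PartialOrder R] [StarOrderedRing R] [Algebra ℝ R] [NonnegSpectrumClass ℝ R]
    [ContinuousFunctionalCalculus ℝ R IsSelfAdjoint] {a : R} (ha : IsStrictlyPositive (1 - a)) :
    ∃ l ∈ Set.Ioo (0 : ℝ) 1, a ≤ l • 1 := by
  rcases subsingleton_or_nontrivial R with _ | _
  · exact ⟨1 / 2, by norm_num, (Subsingleton.elim _ _).le⟩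
  obtain ⟨r, hr, hra⟩ := (CFC.exists_pos_algebraMap_le_iff ha.isSelfAdjoint).2 fun _ =>
    ha.spectrum_pos
  have h_min : algebraMap ℝ R (min r (1 / 2)) ≤ 1 - a :=
    (algebraMap_le_iff_le_spectrum ha.isSelfAdjoint).2 fun t ht =>
      (min_le_left r _).trans ((algebraMap_le_iff_le_spectrum ha.isSelfAdjoint).1 hra t ht)
  refine ⟨1 - min r (1 / 2), ⟨sub_pos.2 (min_lt_of_right_lt one_half_lt_one),
    sub_lt_self 1 (lt_min hr one_half_pos)⟩, ?_⟩
  rw [sub_smul, one_smul, ← Algebra.algebraMap_eq_smul_one]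
  exact le_sub_comm.1 h_min

variable {ι κ : Type*} [Fintype ι] [DecidableEq ι] [Fintype κ]

theorem toEuclideanLin_le_smul_one {S : Matrix ι ι ℝ} {l : ℝ} (hS : S ≤ l • 1) :
    toEuclideanLin S ≤ l • 1 := by
  have h := Matrix.isPositive_toEuclideanLin_iff.2 (Matrix.le_iff.1 hS)
  rwa [map_sub, map_smul, toLpLin_one] at h

theorem isUnit_one_sub_mul_comm (M N : Matrix ι ι ℝ) :
    IsUnit (1 - M * N) ↔ IsUnit (1 - N * M) := by
  rw [isUnit_iff_isUnit_det, isUnit_iff_isUnit_det, det_one_sub_mul_comm]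

theorem dotProduct_mulVec_self_le {W : Matrix ι ι ℝ} (hW : W.PosSemidef)
    (hW1 : (1 - W).PosSemidef) (w : ι → ℝ) : (W *ᵥ w) ⬝ᵥ (W *ᵥ w) ≤ (W *ᵥ w) ⬝ᵥ w := by
  have h := norm_sq_apply_le (isPositive_toEuclideanLin_iff.2 hW)
    (toEuclideanLin_le_smul_one (l := 1) (by rwa [one_smul])) one_pos (WithLp.toLp 2 w)
  rw [one_mul, ← real_inner_self_eq_norm_sq, EuclideanSpace.inner_eq_star_dotProduct,
    EuclideanSpace.inner_eq_star_dotProduct] at h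
  simpa [dotProduct_comm w] using h

theorem mulVec_eq_zero_of_pnp_fixed {W : Matrix ι ι ℝ} (hW : W.PosSemidef)
    (hW1 : (1 - W).PosSemidef) (A : Matrix κ ι ℝ) {γ : ℝ} (hγ : 0 < γ) {x : ι → ℝ}
    (hx : W *ᵥ ((1 - γ • (Aᵀ * A)) *ᵥ x) = x) : A *ᵥ x = 0 := by
  have h_le := dotProduct_mulVec_self_le hW hW1 ((1 - γ • (Aᵀ * A)) *ᵥ x)
  have h_expand : x ⬝ᵥ ((1 - γ • (Aᵀ * A)) *ᵥ x) = x ⬝ᵥ x - γ * ((A *ᵥ x) ⬝ᵥ (A *ᵥ x)) := by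
    rw [sub_mulVec, one_mulVec, smul_mulVec, dotProduct_sub, dotProduct_smul, smul_eq_mul,
      ← mulVec_mulVec, dotProduct_mulVec x, vecMul_transpose]
  rw [hx, h_expand] at h_le
  have h_nonpos : (A *ᵥ x) ⬝ᵥ (A *ᵥ x) ≤ 0 := nonpos_of_mul_nonpos_right (by linarith) hγ
  exact dotProduct_self_eq_zero.1 (h_nonpos.antisymm (dotProduct_self_star_nonneg _))

theorem isUnit_one_sub_mul_one_sub_smul {W : Matrix ι ι ℝ} (hW : W.PosSemidef)
    (hW1 : (1 - W).PosSemidef) {A : Matrix κ ι ℝ}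
    (hker : ∀ x, A *ᵥ x = 0 → W *ᵥ x = x → x = 0) {γ : ℝ} (hγ : 0 < γ) :
    IsUnit (1 - W * (1 - γ • (Aᵀ * A))) := by
  rw [← mulVec_injective_iff_isUnit, ← coe_mulVecLin, injective_iff_map_eq_zero]
  intro x hx
  rw [mulVecLin_apply, sub_mulVec, one_mulVec, sub_eq_zero, ← mulVec_mulVec] at hx
  have hAx : A *ᵥ x = 0 := mulVec_eq_zero_of_pnp_fixed hW hW1 A hγ hx.symm
  refine hker x hAx ?_
  rwa [sub_mulVec, one_mulVec, smul_mulVec, ← mulVec_mulVec, hAx, mulVec_zero, smul_zero, sub_zero,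
    eq_comm] at hx

theorem IsMomentumIteration.convergesLinearly_zero_of_mul {W G : Matrix ι ι ℝ} (hW : 0 ≤ W)
    (hW1 : W ≤ 1) (hG : 0 ≤ G) (hG1 : G ≤ 1) (hunit : IsUnit (1 - W * G)) {α : ℕ → ℝ}
    (hα : ∀ ε > 0, ∀ᶠ k in atTop, |α k| ≤ 1 + ε) {u : ℕ → EuclideanSpace ℝ ι}
    (hu : IsMomentumIteration (toEuclideanLin (W * G)) α u) : ConvergesLinearly u 0 := by
  set R := CFC.sqrt G
  have hR : 0 ≤ R := CFC.sqrt_nonneg G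
  have hRR : R * R = G := CFC.sqrt_mul_sqrt_self G
  have hS : 0 ≤ R * W * R := conjugate_nonneg_of_nonneg hW hR
  have hS1 : R * W * R ≤ 1 := calc
    R * W * R ≤ R * 1 * R := conjugate_le_conjugate_of_nonneg hW1 hR
    _ ≤ 1 := by rwa [mul_one, hRR]
  have h_unit : IsUnit (1 - R * W * R) := by
    rwa [mul_assoc, isUnit_one_sub_mul_comm, mul_assoc, hRR]
  obtain ⟨l, ⟨hl, hl1⟩, hSl⟩ :=
    exists_lt_one_le_smul_one (h_unit.isStrictlyPositive (sub_nonneg.2 hS1))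
  have h_factor : toEuclideanLin R ∘ₗ (toEuclideanCLM (𝕜 := ℝ) (W * R)).toLinearMap =
      toEuclideanLin (R * W * R) := by
    rw [coe_toEuclideanCLM_eq_toEuclideanLin, ← toLpLin_mul, mul_assoc]
  have h_comp : (fun v => toEuclideanCLM (𝕜 := ℝ) (W * R) (toEuclideanLin R v)) =
      toEuclideanLin (W * G) := by
    rw [← hRR, ← mul_assoc, toLpLin_mul (q := 2)]
    rfl
  refine convergesLinearly_zero_of_comp (B := toEuclideanCLM (𝕜 := ℝ) (W * R))
    (C := toEuclideanLin R) (h_factor ▸ isPositive_toEuclideanLin_iff.2 hS.posSemidef)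
    (h_factor ▸ toEuclideanLin_le_smul_one hSl) hl hl1 hα ?_
  rwa [h_comp]

end LoewnerOrder

open scoped MatrixOrder in
theorem posSemidef_one_sub_smul {n : ℕ} {S : Matrix (Fin n) (Fin n) ℝ} (hS : S.IsHermitian)
    {γ : ℝ} (hγ : 0 ≤ γ) (hγS : γ * lamMax S ≤ 1) : (1 - γ • S).PosSemidef := by
  have h_le : S ≤ algebraMap ℝ _ (lamMax S) :=
    le_algebraMap_of_spectrum_le (fun _ => le_csSup finite_real_spectrum.bddAbove) hS
  have h_sum : 1 - γ • S = γ • (algebraMap ℝ _ (lamMax S) - S) + (1 - γ * lamMax S) • 1 := by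
    rw [Algebra.algebraMap_eq_smul_one]
    module
  rw [h_sum]
  exact ((Matrix.le_iff.1 h_le).smul hγ).add (PosSemidef.one.smul (sub_nonneg.2 hγS))

theorem norm2_eq_norm_toLp {n : ℕ} (x : Fin n → ℝ) : norm2 x = ‖WithLp.toLp 2 x‖ := by
  simp [norm2, EuclideanSpace.norm_eq]

section PlugAndPlay

variable {ι κ : Type*} [Fintype ι] [DecidableEq ι] [Fintype κ]

/-- One plug-and-play step `W (y - γ ∇f(y))` for the loss `f(y) = ‖A y - b‖² / 2`. -/
def pnpStep (W : Matrix ι ι ℝ) (A : Matrix κ ι ℝ) (b : κ → ℝ) (γ : ℝ) (y : ι → ℝ) : ι → ℝ :=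
  W *ᵥ (y - γ • (Aᵀ *ᵥ (A *ᵥ y - b)))

/-- The fixed point of `pnpStep W A b γ`, provided the inverted matrix is invertible. -/
noncomputable def pnpLimit (W : Matrix ι ι ℝ) (A : Matrix κ ι ℝ) (b : κ → ℝ) (γ : ℝ) : ι → ℝ :=
  (1 - W * (1 - γ • (Aᵀ * A)))⁻¹ *ᵥ (γ • (W *ᵥ (Aᵀ *ᵥ b)))

theorem pnpStep_eq (W : Matrix ι ι ℝ) (A : Matrix κ ι ℝ) (b : κ → ℝ) (γ : ℝ) (y : ι → ℝ) :
    pnpStep W A b γ y = (W * (1 - γ • (Aᵀ * A))) *ᵥ y + γ • (W *ᵥ (Aᵀ *ᵥ b)) := by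
  simp only [pnpStep, mulVec_sub, mulVec_smul, ← mulVec_mulVec, sub_mulVec, one_mulVec, smul_mulVec]
  module

theorem mulVec_add_sub_inv_mulVec {P : Matrix ι ι ℝ} (hP : IsUnit (1 - P)) (c y : ι → ℝ) :
    P *ᵥ y + c - (1 - P)⁻¹ *ᵥ c = P *ᵥ (y - (1 - P)⁻¹ *ᵥ c) := by
  have h_fixed : (1 - P) *ᵥ ((1 - P)⁻¹ *ᵥ c) = c := by
    rw [mulVec_mulVec, mul_nonsing_inv _ ((isUnit_iff_isUnit_det _).1 hP), one_mulVec]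
  rw [sub_mulVec, one_mulVec, sub_eq_iff_eq_add] at h_fixed
  nth_rewrite 1 [h_fixed]
  rw [mulVec_sub]
  abel

theorem pnpStep_sub_pnpLimit {W : Matrix ι ι ℝ} {A : Matrix κ ι ℝ} {γ : ℝ}
    (hunit : IsUnit (1 - W * (1 - γ • (Aᵀ * A)))) (b : κ → ℝ) (y : ι → ℝ) :
    pnpStep W A b γ y - pnpLimit W A b γ =
      (W * (1 - γ • (Aᵀ * A))) *ᵥ (y - pnpLimit W A b γ) := by
  rw [pnpStep_eq, pnpLimit, mulVec_add_sub_inv_mulVec hunit]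

open scoped MatrixOrder in
theorem IsMomentumIteration.convergesLinearly_pnpLimit {W : Matrix ι ι ℝ} (hW : W.PosSemidef)
    (hW1 : (1 - W).PosSemidef) {A : Matrix κ ι ℝ} {γ : ℝ} (hγ : 0 ≤ γ)
    (hG : (1 - γ • (Aᵀ * A)).PosSemidef) (hunit : IsUnit (1 - W * (1 - γ • (Aᵀ * A))))
    {α : ℕ → ℝ} (hα : ∀ ε > 0, ∀ᶠ k in atTop, |α k| ≤ 1 + ε) {b : κ → ℝ} {x : ℕ → ι → ℝ}
    (hx : IsMomentumIteration (pnpStep W A b γ) α x) :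
    ConvergesLinearly (fun k => WithLp.toLp 2 (x k)) (WithLp.toLp 2 (pnpLimit W A b γ)) := by
  have hG1 : 1 - γ • (Aᵀ * A) ≤ 1 :=
    sub_le_self 1 ((posSemidef_conjTranspose_mul_self A).smul hγ).nonneg
  have h_error := (hx.sub_const (pnpStep_sub_pnpLimit hunit b)).map
    (S := toEuclideanLin (W * (1 - γ • (Aᵀ * A)))) (WithLp.linearEquiv 2 ℝ _).symm.toLinearMap
    fun _ => rfl
  obtain ⟨β, hβ, hO⟩ :=
    h_error.convergesLinearly_zero_of_mul hW.nonneg (Matrix.le_iff.2 hW1) hG.nonneg hG1 hunit hα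
  exact ⟨β, hβ, by simpa using hO⟩

end PlugAndPlay

theorem stmt9_general {n m : ℕ} (A : Matrix (Fin m) (Fin n) ℝ) (b : Fin m → ℝ)
    (W : Matrix (Fin n) (Fin n) ℝ) (hW : W.PosSemidef) (hW1 : (1 - W).PosSemidef)
    (hker : ∀ x, A *ᵥ x = 0 → W *ᵥ x = x → x = 0)
    {γ : ℝ} (hγ0 : 0 < γ) (hγ1 : γ * lamMax (Aᵀ * A) ≤ 1)
    {α : ℕ → ℝ} (hα : ∀ ε > 0, ∀ᶠ k in atTop, |α k| ≤ 1 + ε) :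
    IsUnit (1 - W * (1 - γ • (Aᵀ * A))) ∧
    ∀ x y : ℕ → Fin n → ℝ,
      (∀ k, 1 ≤ k → x k = W *ᵥ (y k - γ • (Aᵀ *ᵥ (A *ᵥ y k - b)))) →
      (∀ k, 1 ≤ k → y (k + 1) = x k + α k • (x k - x (k - 1))) →
      ∃ C, 0 < C ∧ ∃ β, 0 ≤ β ∧ β < 1 ∧ ∃ K, 1 ≤ K ∧ ∀ k, K ≤ k →
        norm2 (x k - (1 - W * (1 - γ • (Aᵀ * A)))⁻¹ *ᵥ (γ • (W *ᵥ (Aᵀ *ᵥ b)))) ≤ C * β ^ k := by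
  have hunit := isUnit_one_sub_mul_one_sub_smul hW hW1 hker hγ0
  have hG : (1 - γ • (Aᵀ * A)).PosSemidef :=
    posSemidef_one_sub_smul (posSemidef_conjTranspose_mul_self A).isHermitian hγ0.le hγ1
  refine ⟨hunit, fun x y hx hy => ?_⟩
  have h_iter : IsMomentumIteration (pnpStep W A b γ) α x :=
    isMomentumIteration_of_extrapolation hx hy
  simp only [norm2_eq_norm_toLp, WithLp.toLp_sub]
  exact (h_iter.convergesLinearly_pnpLimit hW hW1 hγ0.le hG hunit hα).exists_norm_sub_le

theorem mul_le_one_of_lt_one_div {γ l : ℝ} (hγ : 0 ≤ γ) (h : γ < 1 / l) : γ * l ≤ 1 :=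
  ((lt_div_iff₀ (one_div_pos.1 (hγ.trans_lt h))).1 h).le

theorem eventually_abs_le_one_add_of_tendsto {α : ℕ → ℝ} (hα : Tendsto α atTop (nhds 1)) :
    ∀ ε > 0, ∀ᶠ k in atTop, |α k| ≤ 1 + ε := fun ε hε =>
  hα.abs.eventually_le_const (by simpa using hε)

theorem stmt9 (n m : ℕ) (A : Matrix (Fin m) (Fin n) ℝ) (b : Fin m → ℝ)
    (W : Matrix (Fin n) (Fin n) ℝ)
    (hW : W.PosSemidef) (hW1 : ((1 : Matrix (Fin n) (Fin n) ℝ) - W).PosSemidef)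
    (hA : A ≠ 0)
    (hker : ∀ x : Fin n → ℝ, A *ᵥ x = 0 → W *ᵥ x = x → x = 0)
    (γ : ℝ) (hγ0 : 0 < γ) (hγ1 : γ < 1 / lamMax (Aᵀ * A))
    (α : ℕ → ℝ) (hα : Tendsto α atTop (nhds 1)) :
    IsUnit ((1 : Matrix (Fin n) (Fin n) ℝ) - W * (1 - γ • (Aᵀ * A))) ∧
    ∀ x y : ℕ → Fin n → ℝ,
      y 1 = x 0 →
      (∀ k, 1 ≤ k → x k = W *ᵥ (y k - γ • (Aᵀ *ᵥ (A *ᵥ y k - b)))) →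
      (∀ k, 1 ≤ k → y (k + 1) = x k + α k • (x k - x (k - 1))) →
      ∃ C, 0 < C ∧ ∃ β, 0 ≤ β ∧ β < 1 ∧ ∃ K, 1 ≤ K ∧ ∀ k, K ≤ k →
        norm2 (x k -
          ((1 : Matrix (Fin n) (Fin n) ℝ) - W * (1 - γ • (Aᵀ * A)))⁻¹ *ᵥ
            (γ • (W *ᵥ (Aᵀ *ᵥ b)))) ≤ C * β ^ k :=
  (stmt9_general A b W hW hW1 hker hγ0 (mul_le_one_of_lt_one_div hγ0.le hγ1)
    (eventually_abs_le_one_add_of_tendsto hα)).imp_right fun h x y _ => h x y
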